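/- Let n ≥ 4 with n ∉ {1,3,5}, and let k be a field of characteristic e > 0 such that e does not divide n!. Then the Brauer algebra Br(D_n, k, 0) with parameter δ = 0 is not a semisimple ring. -/

import Mathlib

open FreeAlgebra

/-- The path graph (Coxeter diagram of type `A_n`) on nodes `1, …, n`
(realized as `Fin n`, node `i` corresponding to index `i-1`): node `i` is
adjacent to node `i+1` for `1 ≤ i ≤ n-1`. -/
def typeA (n : ℕ) : SimpleGraph (Fin n) :=
  SimpleGraph.fromRel (fun i j => (i : ℕ) + 1 = (j : ℕ))

/-- The Coxeter diagram of type `D_n` (`n ≥ 4`) on nodes `1, …, n` (realized as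
`Fin n`, node `i` corresponding to index `i-1`): nodes `1` and `2` are both
adjacent to node `3`, and nodes `i`, `i+1` are adjacent for `3 ≤ i ≤ n-1`. -/
def typeD (n : ℕ) : SimpleGraph (Fin n) :=
  SimpleGraph.fromRel (fun i j =>
    ((i : ℕ) = 0 ∧ (j : ℕ) = 2) ∨ ((i : ℕ) = 1 ∧ (j : ℕ) = 2) ∨
      (2 ≤ (i : ℕ) ∧ (i : ℕ) + 1 = (j : ℕ)))

/-- The Coxeter diagram of type `E_n` (`n = 6, 7, 8`) on nodes `1, …, n`
(realized as `Fin n`, node `i` corresponding to index `i-1`): a path on nodes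
`1, 3, 4, …, n` together with node `2` attached to node `4`. -/
def typeE (n : ℕ) : SimpleGraph (Fin n) :=
  SimpleGraph.fromRel (fun i j =>
    ((i : ℕ) = 0 ∧ (j : ℕ) = 2) ∨ ((i : ℕ) = 1 ∧ (j : ℕ) = 3) ∨
      (2 ≤ (i : ℕ) ∧ (i : ℕ) + 1 = (j : ℕ)))
/-- The defining relations of the Brauer algebra `Br(Q, R, δ)` of simply-laced
type given by the graph `Q`, imposed on the free `R`-algebra on the generators
`R_1, …, R_n` (encoded as `Sum.inl i`) and `E_1, …, E_n` (encoded as `Sum.inr i`). -/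
inductive BrauerRel (n : ℕ) (Q : SimpleGraph (Fin n)) (R : Type*) [CommRing R] (δ : R) :
    FreeAlgebra R (Fin n ⊕ Fin n) → FreeAlgebra R (Fin n ⊕ Fin n) → Prop
  /-- `R_i² = 1` -/
  | rsq (i : Fin n) : BrauerRel n Q R δ (ι R (.inl i) * ι R (.inl i)) 1
  /-- `R_i E_i = E_i` -/
  | re (i : Fin n) : BrauerRel n Q R δ (ι R (.inl i) * ι R (.inr i)) (ι R (.inr i))
  /-- `E_i R_i = E_i` -/
  | er (i : Fin n) : BrauerRel n Q R δ (ι R (.inr i) * ι R (.inl i)) (ι R (.inr i))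
  /-- `E_i² = δ·E_i` -/
  | esq (i : Fin n) : BrauerRel n Q R δ (ι R (.inr i) * ι R (.inr i)) (δ • ι R (.inr i))
  /-- `R_i R_j = R_j R_i` whenever `i ≁ j` -/
  | rr (i j : Fin n) (hne : i ≠ j) (hadj : ¬ Q.Adj i j) :
      BrauerRel n Q R δ (ι R (.inl i) * ι R (.inl j)) (ι R (.inl j) * ι R (.inl i))
  /-- `E_i R_j = R_j E_i` whenever `i ≁ j` -/
  | erc (i j : Fin n) (hne : i ≠ j) (hadj : ¬ Q.Adj i j) :
      BrauerRel n Q R δ (ι R (.inr i) * ι R (.inl j)) (ι R (.inl j) * ι R (.inr i))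
  /-- `E_i E_j = E_j E_i` whenever `i ≁ j` -/
  | ee (i j : Fin n) (hne : i ≠ j) (hadj : ¬ Q.Adj i j) :
      BrauerRel n Q R δ (ι R (.inr i) * ι R (.inr j)) (ι R (.inr j) * ι R (.inr i))
  /-- `R_i R_j R_i = R_j R_i R_j` whenever `i ∼ j` -/
  | braid (i j : Fin n) (hadj : Q.Adj i j) :
      BrauerRel n Q R δ (ι R (.inl i) * ι R (.inl j) * ι R (.inl i))
        (ι R (.inl j) * ι R (.inl i) * ι R (.inl j))
  /-- `R_j R_i E_j = E_i E_j` whenever `i ∼ j` -/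
  | rre (i j : Fin n) (hadj : Q.Adj i j) :
      BrauerRel n Q R δ (ι R (.inl j) * ι R (.inl i) * ι R (.inr j))
        (ι R (.inr i) * ι R (.inr j))
  /-- `R_i E_j R_i = R_j E_i R_j` whenever `i ∼ j` -/
  | rer (i j : Fin n) (hadj : Q.Adj i j) :
      BrauerRel n Q R δ (ι R (.inl i) * ι R (.inr j) * ι R (.inl i))
        (ι R (.inl j) * ι R (.inr i) * ι R (.inl j))

/-- The Brauer algebra `Br(Q, R, δ)` of simply-laced type `Q` over the
commutative ring `R` with parameter `δ ∈ R`. -/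
abbrev BrauerAlgebra (n : ℕ) (Q : SimpleGraph (Fin n)) (R : Type*) [CommRing R] (δ : R) :=
  RingQuot (BrauerRel n Q R δ)


namespace BrD

abbrev T := (ℕ → Bool) × Option Bool

def chi (p q : ℕ) : ℕ → Bool := fun m => decide (m = p ∨ m = q)

/-- reflection `ε_p ∓ ε_q` -/
def Rf (p q : ℕ) (s : Bool) (t : T) : T :=
  (fun m => t.1 (Equiv.swap p q m),
    t.2.map (fun u => xor u (s && xor (t.1 p) (t.1 q))))

open Classical in
noncomputable def Ef (p q : ℕ) (s : Bool) (t : T) : Option T :=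
  if t.1 p ≠ t.1 q then some (chi p q, t.2.map (fun _ => s))
  else if t.1 = chi p q ∧ t.2 = some (!s) then some (chi p q, none) else none

lemma Ef_ne {p q : ℕ} {s : Bool} {S : ℕ → Bool} {u : Option Bool} (h : S p ≠ S q) :
    Ef p q s (S, u) = some (chi p q, u.map (fun _ => s)) := by simp [Ef, h]

lemma Ef_sp {p q : ℕ} {s : Bool} {S : ℕ → Bool} {u : Option Bool} (h : S = chi p q)
    (hu : u = some (!s)) : Ef p q s (S, u) = some (chi p q, none) := by
  subst h hu; simp [Ef, chi]

lemma Ef_no {p q : ℕ} {s : Bool} {S : ℕ → Bool} {u : Option Bool} (h : S p = S q)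
    (hu : ¬ (S = chi p q ∧ u = some (!s))) : Ef p q s (S, u) = none := by
  simp only [Ef, h, ne_eq, not_true_eq_false, if_false, if_neg hu]

lemma chi_comm (p q : ℕ) : chi p q = chi q p := by
  funext m; simp [chi, or_comm]

lemma Rf_comm (p q : ℕ) (s : Bool) : Rf p q s = Rf q p s := by
  funext t; simp [Rf, Equiv.swap_comm p q, Bool.xor_comm (t.1 p)]

lemma Ef_comm (p q : ℕ) (s : Bool) : Ef p q s = Ef q p s := by
  funext ⟨S, u⟩
  by_cases h : S p = S q
  · by_cases h2 : S = chi p q ∧ u = some (!s)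
    · rw [Ef_sp h2.1 h2.2, Ef_sp (by rw [chi_comm, h2.1]) h2.2, chi_comm]
    · rw [Ef_no h h2, Ef_no h.symm (by rwa [chi_comm])]
  · rw [Ef_ne h, Ef_ne (Ne.symm h), chi_comm]

lemma Rf_Rf (p q : ℕ) (s : Bool) (t : T) : Rf p q s (Rf p q s t) = t := by
  obtain ⟨S, u⟩ := t
  rcases u with _ | u <;> simp [Rf]
  cases s <;> cases u <;> cases S p <;> cases S q <;> rfl

lemma Rf_chi (p q : ℕ) : (fun m => chi p q (Equiv.swap p q m)) = chi p q := by
  funext m; simp only [chi, Equiv.swap_apply_def]; grind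

lemma chi_swap_iff (p q : ℕ) (S : ℕ → Bool) :
    (fun m => S (Equiv.swap p q m)) = chi p q ↔ S = chi p q := by
  constructor
  · intro h
    rw [← Rf_chi, ← h]; funext m; simp
  · rintro rfl; exact Rf_chi p q

lemma chi_left (p q : ℕ) : chi p q p = true := by simp [chi]
lemma chi_right (p q : ℕ) : chi p q q = true := by simp [chi]
lemma chi_other {p q m : ℕ} (h : m ≠ p) (h' : m ≠ q) : chi p q m = false := by simp [chi, h, h']

/-- `R E = E` -/
lemma Rf_Ef (p q : ℕ) (s : Bool) (t : T) : (Ef p q s t).map (Rf p q s) = Ef p q s t := by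
  unfold Ef
  split_ifs <;> simp [Rf, Rf_chi, chi_left, chi_right, Option.map_map, Function.comp_def]

lemma Ef_Rf (p q : ℕ) (s : Bool) (t : T) : Ef p q s (Rf p q s t) = Ef p q s t := by
  obtain ⟨S, u⟩ := t
  by_cases h : S p = S q
  · have hu : u.map (fun u => xor u (s && xor (S p) (S q))) = u := by simp [h]
    simp only [Rf, hu]
    by_cases h2 : S = chi p q ∧ u = some (!s)
    · rw [Ef_sp h2.1 h2.2, Ef_sp ((chi_swap_iff _ _ _).2 h2.1) h2.2]
    · rw [Ef_no h h2, Ef_no (by simp [h]) (by rwa [chi_swap_iff])]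
  · rw [Ef_ne h, Rf, Ef_ne (by simpa using Ne.symm h)]
    simp [Function.comp_def]

lemma Ef_Ef (p q : ℕ) (s : Bool) (t : T) : (Ef p q s t).bind (Ef p q s) = none := by
  obtain ⟨S, u⟩ := t
  unfold Ef
  by_cases h : S p = S q
  · by_cases h2 : S = chi p q ∧ u = some (!s)
    · simp [h2.1, h2.2, chi_left, chi_right]
    · simp [h, h2]
  · cases u <;> simp [h, chi_left, chi_right]

section pair
variable (p q : ℕ)

lemma pair_RR (s s' : Bool) (t : T) : Rf p q s (Rf p q s' t) = Rf p q s' (Rf p q s t) := by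
  obtain ⟨S, u⟩ := t
  rcases u with _ | u <;> simp [Rf]
  cases s <;> cases s' <;> cases u <;> cases S p <;> cases S q <;> rfl

lemma pair_ER (s s' : Bool) (t : T) :
    Ef p q s (Rf p q s' t) = (Ef p q s t).map (Rf p q s') := by
  obtain ⟨S, u⟩ := t
  by_cases h : S p = S q
  · have hu : u.map (fun u => xor u (s' && xor (S p) (S q))) = u := by simp [h]
    simp only [Rf, hu]
    by_cases h2 : S = chi p q ∧ u = some (!s)
    · rw [Ef_sp h2.1 h2.2, Ef_sp ((chi_swap_iff _ _ _).2 h2.1) h2.2]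
      simp [Rf, Rf_chi]
    · rw [Ef_no h h2, Ef_no (by simp [h]) (by rwa [chi_swap_iff])]
      rfl
  · rw [Ef_ne h, Rf, Ef_ne (by simpa using Ne.symm h)]
    simp [Function.comp_def, Rf, Rf_chi, chi_left, chi_right]

lemma pair_EE (s : Bool) (t : T) :
    (Ef p q (!s) t).bind (Ef p q s) = (Ef p q s t).bind (Ef p q (!s)) := by
  obtain ⟨S, u⟩ := t
  unfold Ef
  by_cases h : S p = S q
  · by_cases h2 : S = chi p q
    · subst h2
      rcases u with _ | u <;> simp [chi_left, chi_right]
      cases u <;> cases s <;> simp [chi_left, chi_right]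
    · simp [h, h2]
  · cases u <;> simp [h, chi_left, chi_right]

end pair

lemma disj_RR {p q r w : ℕ} (h1 : p ≠ r) (h2 : p ≠ w) (h3 : q ≠ r) (h4 : q ≠ w)
    (s s' : Bool) (t : T) : Rf p q s (Rf r w s' t) = Rf r w s' (Rf p q s t) := by
  obtain ⟨S, u⟩ := t
  have e1 : Equiv.swap r w p = p := Equiv.swap_apply_of_ne_of_ne h1 h2
  have e2 : Equiv.swap r w q = q := Equiv.swap_apply_of_ne_of_ne h3 h4
  have e3 : Equiv.swap p q r = r := Equiv.swap_apply_of_ne_of_ne h1.symm h3.symm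
  have e4 : Equiv.swap p q w = w := Equiv.swap_apply_of_ne_of_ne h2.symm h4.symm
  simp only [Rf, e1, e2, e3, e4, Option.map_map, Function.comp_def, Prod.mk.injEq]
  constructor
  · funext m; congr 1
    simp only [Equiv.swap_apply_def]; grind
  · congr 1; funext u; simp only [Bool.xor_assoc]; congr 1; rw [Bool.xor_comm]

lemma disj_ER {p q r w : ℕ} (h1 : p ≠ r) (h2 : p ≠ w) (h3 : q ≠ r) (h4 : q ≠ w)
    (s s' : Bool) (t : T) :
    Ef p q s (Rf r w s' t) = (Ef p q s t).map (Rf r w s') := by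
  obtain ⟨S, u⟩ := t
  have e1 : Equiv.swap r w p = p := Equiv.swap_apply_of_ne_of_ne h1 h2
  have e2 : Equiv.swap r w q = q := Equiv.swap_apply_of_ne_of_ne h3 h4
  have c1 : chi p q r = false := chi_other h1.symm h3.symm
  have c2 : chi p q w = false := chi_other h2.symm h4.symm
  have c3 : (fun m => chi p q (Equiv.swap r w m)) = chi p q := by
    funext m; simp only [chi, Equiv.swap_apply_def]; grind
  have c4 : (fun m => S (Equiv.swap r w m)) = chi p q ↔ S = chi p q := by
    constructor
    · intro h
      rw [← c3, ← h]; funext m; simp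
    · rintro rfl; exact c3
  by_cases h : S p = S q
  · by_cases h2 : S = chi p q
    · subst h2
      have hu : u.map (fun u => xor u (s' && xor (chi p q r) (chi p q w))) = u := by simp [c1, c2]
      simp only [Rf, hu, c3]
      by_cases h2 : u = some (!s)
      · rw [Ef_sp rfl h2]
        simp [Rf, c3]
      · rw [Ef_no h (by simpa using h2)]
        rfl
    · rw [Ef_no h (by simp [h2]), Rf, Ef_no (by simp only [e1, e2, h]) (by simp only [c4, h2]; simp)]
      rfl
  · rw [Ef_ne h, Rf, Ef_ne (by simpa only [e1, e2] using h)]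
    simp [Function.comp_def, Rf, c3, c1, c2]

lemma disj_EE {p q r w : ℕ} (h1 : p ≠ r) (h2 : p ≠ w) (h3 : q ≠ r) (h4 : q ≠ w)
    (s s' : Bool) (t : T) : (Ef r w s' t).bind (Ef p q s) = none := by
  have c1 : chi r w p = false := chi_other h1 h2
  have c2 : chi r w q = false := chi_other h3 h4
  have c3 : chi r w ≠ chi p q := by
    intro h; have := congrFun h p; rw [c1, chi_left] at this; cases this
  unfold Ef
  split_ifs <;> simp [c1, c2, c3]

lemma adj_braid {a b c : ℕ} (hab : a ≠ b) (hbc : b ≠ c) (hac : a ≠ c)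
    (s s' : Bool) (t : T) :
    Rf a b s (Rf b c s' (Rf a b s t)) = Rf b c s' (Rf a b s (Rf b c s' t)) := by
  obtain ⟨S, u⟩ := t
  have e1 : Equiv.swap a b c = c := Equiv.swap_apply_of_ne_of_ne hac.symm hbc.symm
  have e2 : Equiv.swap b c a = a := Equiv.swap_apply_of_ne_of_ne hab hac
  simp only [Rf, e1, e2, Equiv.swap_apply_left, Equiv.swap_apply_right, Option.map_map,
    Function.comp_def, Prod.mk.injEq]
  constructor
  · funext m; congr 1
    simp only [Equiv.swap_apply_def]; grind
  · congr 1; funext u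
    cases s <;> cases s' <;> cases u <;> cases S a <;> cases S b <;> cases S c <;> rfl

/-- `R_β R_α E_β = E_α E_β` -/
lemma adj_RRE {a b c : ℕ} (hab : a ≠ b) (hbc : b ≠ c) (hac : a ≠ c)
    (s s' : Bool) (t : T) :
    ((Ef b c s' t).map (Rf a b s)).map (Rf b c s') = (Ef b c s' t).bind (Ef a b s) := by
  obtain ⟨S, u⟩ := t
  have e1 : Equiv.swap a b c = c := Equiv.swap_apply_of_ne_of_ne hac.symm hbc.symm
  have e2 : Equiv.swap b c a = a := Equiv.swap_apply_of_ne_of_ne hab hac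
  have c1 : chi b c a = false := chi_other hab hac
  have c2 : (fun m => chi b c (Equiv.swap a b (Equiv.swap b c m))) = chi a b := by
    funext m; simp only [chi, Equiv.swap_apply_def]; grind
  unfold Ef
  split_ifs
  · cases u <;> simp [Rf, e1, c1, c2, chi_left, chi_right]
    cases s <;> cases s' <;> rfl
  · simp [Rf, e1, c1, c2, chi_left, chi_right]
  · simp

lemma adj_RER {a b c : ℕ} (hab : a ≠ b) (hbc : b ≠ c) (hac : a ≠ c)
    (s s' : Bool) (t : T) :
    (Ef b c s' (Rf a b s t)).map (Rf a b s) = (Ef a b s (Rf b c s' t)).map (Rf b c s') := by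
  obtain ⟨S, u⟩ := t
  have e1 : Equiv.swap a b c = c := Equiv.swap_apply_of_ne_of_ne hac.symm hbc.symm
  have e2 : Equiv.swap b c a = a := Equiv.swap_apply_of_ne_of_ne hab hac
  have c1 : chi b c a = false := chi_other hab hac
  have c1' : chi a b c = false := chi_other hac.symm hbc.symm
  have c2 : (fun m => chi b c (Equiv.swap a b m)) = chi a c := by
    funext m; simp only [chi, Equiv.swap_apply_def]; grind
  have c3 : (fun m => chi a b (Equiv.swap b c m)) = chi a c := by
    funext m; simp only [chi, Equiv.swap_apply_def]; grind
  have c4 : (fun m => S (Equiv.swap a b m)) = chi b c ↔ S = chi a c := by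
    constructor
    · intro h
      rw [← c2, ← h]; funext m; simp
    · rintro rfl; rw [← c2]; funext m; simp
  have c5 : (fun m => S (Equiv.swap b c m)) = chi a b ↔ S = chi a c := by
    constructor
    · intro h
      rw [← c3, ← h]; funext m; simp
    · rintro rfl; rw [← c3]; funext m; simp
  by_cases h : S a = S c
  · by_cases h2 : S = chi a c
    · have c6 : S b = false := by rw [h2]; exact chi_other hab.symm hbc
      have c7 : S a = true := by rw [h2]; exact chi_left _ _
      have c8 : S c = true := by rw [h2]; exact chi_right _ _
      simp only [Rf, c4.2 h2, c5.2 h2, c6, c7, c8]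
      by_cases hu : u = some (xor s (!s'))
      · rw [Ef_sp rfl (by subst hu; cases s <;> cases s' <;> rfl),
          Ef_sp rfl (by subst hu; cases s <;> cases s' <;> rfl)]
        simp [Rf, c2, c3]
      · rw [Ef_no (by simp [chi]), Ef_no (by simp [chi])]
        · rfl
        · rcases u with _ | u
          · simp
          · revert hu; cases s <;> cases s' <;> cases u <;> simp
        · rcases u with _ | u
          · simp
          · revert hu; cases s <;> cases s' <;> cases u <;> simp
    · simp only [Rf]
      rw [Ef_no (by simp [e1, h]) (by simp only [c4, h2]; simp),
        Ef_no (by simp [e2, h]) (by simp only [c5, h2]; simp)]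
      rfl
  · simp only [Rf]
    rw [Ef_ne (by simpa [e1] using h), Ef_ne (by simpa [e2] using h)]
    simp only [Rf, Option.map_some, c2, c3, chi_left, chi_right, c1, c1', Option.map_map]
    cases u <;> cases s <;> cases s' <;> rfl

section rep
variable (k : Type) [Field k]

noncomputable def op (g : T → Option T) : Module.End k (T →₀ k) :=
  Finsupp.linearCombination k (fun t => (g t).elim 0 (fun t' => Finsupp.single t' (1 : k)))

lemma op_single (g : T → Option T) (t : T) :
    op k g (Finsupp.single t 1) = (g t).elim 0 (fun t' => Finsupp.single t' (1 : k)) := by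
  simp [op]

lemma end_ext {f g : Module.End k (T →₀ k)}
    (h : ∀ t, f (Finsupp.single t 1) = g (Finsupp.single t 1)) : f = g := by
  apply Finsupp.lhom_ext'
  intro t
  ext
  simpa using DFunLike.congr_fun (h t) _

lemma op_mul (g h : T → Option T) : op k g * op k h = op k (fun t => (h t).bind g) := by
  apply end_ext
  intro t
  rw [Module.End.mul_apply, op_single, op_single]
  cases h t <;> simp [op_single]

lemma op_one : op k some = 1 := by
  apply end_ext; intro t; rw [op_single]; rfl

lemma op_zero : op k (fun _ => none) = 0 := by
  apply end_ext; intro t; rw [op_single]; rfl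

def P (i : ℕ) : ℕ := i - 1
def Q (i : ℕ) : ℕ := max 1 i
def sg (i : ℕ) : Bool := decide (i = 1)

noncomputable def genf (n : ℕ) : Fin n ⊕ Fin n → (T → Option T)
  | .inl i => fun t => some (Rf (P i) (Q i) (sg i) t)
  | .inr i => Ef (P i) (Q i) (sg i)

noncomputable def pre (n : ℕ) : FreeAlgebra k (Fin n ⊕ Fin n) →ₐ[k] Module.End k (T →₀ k) :=
  FreeAlgebra.lift k (fun x => op k (genf n x))

lemma pre_ι (n : ℕ) (x : Fin n ⊕ Fin n) : pre k n (ι k x) = op k (genf n x) := by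
  simp [pre]

lemma adj_cases {n : ℕ} {i j : Fin n} (h : (typeD n).Adj i j) :
    ∃ a b c : ℕ, a ≠ b ∧ b ≠ c ∧ a ≠ c ∧
      ((P i = a ∧ Q i = b ∧ P j = b ∧ Q j = c) ∨ (P j = a ∧ Q j = b ∧ P i = b ∧ Q i = c)) := by
  simp only [typeD, SimpleGraph.fromRel_adj] at h
  obtain ⟨-, h | h⟩ := h
  · exact ⟨P i, Q i, Q j, by simp only [P, Q]; omega, by simp only [Q]; omega,
      by simp only [P, Q]; omega, Or.inl ⟨rfl, rfl, by simp only [P, Q]; omega, rfl⟩⟩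
  · exact ⟨P j, Q j, Q i, by simp only [P, Q]; omega, by simp only [Q]; omega,
      by simp only [P, Q]; omega, Or.inr ⟨rfl, rfl, by simp only [P, Q]; omega, rfl⟩⟩

lemma nadj_cases {n : ℕ} {i j : Fin n} (hne : i ≠ j) (h : ¬ (typeD n).Adj i j) :
    (P i = P j ∧ Q i = Q j ∧ sg i = !sg j) ∨
      (P i ≠ P j ∧ P i ≠ Q j ∧ Q i ≠ P j ∧ Q i ≠ Q j) := by
  simp only [typeD, SimpleGraph.fromRel_adj] at h
  have h' : (i : ℕ) ≠ j := fun h => hne (Fin.ext h)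
  have h2 := fun hh => h ⟨hne, hh⟩
  by_cases hij : (i : ℕ) ≤ 1 ∧ (j : ℕ) ≤ 1
  · left
    have : ((i : ℕ) = 0 ∧ (j : ℕ) = 1) ∨ ((i : ℕ) = 1 ∧ (j : ℕ) = 0) := by omega
    rcases this with ⟨h1, h2⟩ | ⟨h1, h2⟩ <;> simp [P, Q, sg, h1, h2]
  · right
    simp only [P, Q]
    omega

lemma PQ (i : ℕ) : P i ≠ Q i := by simp only [P, Q]; omega

lemma pre_rel (n : ℕ) ⦃x y : FreeAlgebra k (Fin n ⊕ Fin n)⦄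
    (h : BrauerRel n (typeD n) k 0 x y) : pre k n x = pre k n y := by
  cases h with
  | rsq i =>
    simp only [map_mul, map_one, pre_ι, op_mul, genf, Option.bind_some, Rf_Rf]
    exact op_one k
  | re i =>
    simp only [map_mul, pre_ι, op_mul, genf]
    congr 1; funext t
    simpa [Option.map_eq_bind, Function.comp_def] using Rf_Ef (P i) (Q i) (sg i) t
  | er i =>
    simp only [map_mul, pre_ι, op_mul, genf, Option.bind_some, Ef_Rf]
  | esq i =>
    simp only [map_mul, pre_ι, op_mul, genf, Ef_Ef, zero_smul, map_zero]
    exact op_zero k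
  | rr i j hne hadj =>
    simp only [map_mul, pre_ι, op_mul, genf, Option.bind_some]
    congr 1; funext t; congr 1
    rcases nadj_cases hne hadj with ⟨h1, h2, -⟩ | ⟨h1, h2, h3, h4⟩
    · rw [h1, h2]; exact pair_RR _ _ _ _ _
    · exact disj_RR h1 h2 h3 h4 _ _ _
  | erc i j hne hadj =>
    simp only [map_mul, pre_ι, op_mul, genf, Option.bind_some]
    congr 1; funext t
    have e : ((Ef (P i) (Q i) (sg i) t).bind fun t => some (Rf (P j) (Q j) (sg j) t)) =
        (Ef (P i) (Q i) (sg i) t).map (Rf (P j) (Q j) (sg j)) := by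
      rw [Option.map_eq_bind]; rfl
    rw [e]
    rcases nadj_cases hne hadj with ⟨h1, h2, -⟩ | ⟨h1, h2, h3, h4⟩
    · rw [h1, h2]; exact pair_ER _ _ _ _ _
    · exact disj_ER h1 h2 h3 h4 _ _ _
  | ee i j hne hadj =>
    simp only [map_mul, pre_ι, op_mul, genf]
    congr 1; funext t
    rcases nadj_cases hne hadj with ⟨h1, h2, h3⟩ | ⟨h1, h2, h3, h4⟩
    · rw [h1, h2, h3]; exact (pair_EE _ _ _ _).symm
    · rw [disj_EE h1 h2 h3 h4, disj_EE h1.symm h3.symm h2.symm h4.symm]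
  | braid i j hadj =>
    simp only [map_mul, pre_ι, op_mul, genf, Option.bind_some]
    congr 1; funext t; congr 1
    obtain ⟨a, b, c, hab, hbc, hac, ⟨h1, h2, h3, h4⟩ | ⟨h1, h2, h3, h4⟩⟩ := adj_cases hadj <;>
      rw [h1, h2, h3, h4]
    · exact adj_braid hab hbc hac _ _ _
    · exact (adj_braid hab hbc hac _ _ _).symm
  | rre i j hadj =>
    simp only [map_mul, pre_ι, op_mul, genf, Option.bind_some]
    congr 1; funext t
    have key : (((Ef (P j) (Q j) (sg j) t).map (Rf (P i) (Q i) (sg i))).map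
        (Rf (P j) (Q j) (sg j))) =
        (Ef (P j) (Q j) (sg j) t).bind (Ef (P i) (Q i) (sg i)) := by
      obtain ⟨a, b, c, hab, hbc, hac, ⟨h1, h2, h3, h4⟩ | ⟨h1, h2, h3, h4⟩⟩ := adj_cases hadj <;>
        rw [h1, h2, h3, h4]
      · exact adj_RRE hab hbc hac _ _ _
      · rw [Rf_comm a b, Ef_comm a b, Rf_comm b c, Ef_comm b c]
        exact adj_RRE hbc.symm hab.symm hac.symm _ _ _
    rw [← key]
    cases Ef (P j) (Q j) (sg j) t <;> rfl
  | rer i j hadj =>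
    simp only [map_mul, pre_ι, op_mul, genf, Option.bind_some]
    congr 1; funext t
    have key : (Ef (P j) (Q j) (sg j) (Rf (P i) (Q i) (sg i) t)).map (Rf (P i) (Q i) (sg i)) =
        (Ef (P i) (Q i) (sg i) (Rf (P j) (Q j) (sg j) t)).map (Rf (P j) (Q j) (sg j)) := by
      obtain ⟨a, b, c, hab, hbc, hac, ⟨h1, h2, h3, h4⟩ | ⟨h1, h2, h3, h4⟩⟩ := adj_cases hadj <;>
        rw [h1, h2, h3, h4]
      · exact adj_RER hab hbc hac _ _ _
      · exact (adj_RER hab hbc hac _ _ _).symm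
    rw [Option.map_eq_bind, Option.map_eq_bind] at key
    exact key

noncomputable def rep (n : ℕ) : BrauerAlgebra n (typeD n) k 0 →ₐ[k] Module.End k (T →₀ k) :=
  RingQuot.liftAlgHom k ⟨pre k n, pre_rel k n⟩

lemma rep_mk (n : ℕ) (x : FreeAlgebra k (Fin n ⊕ Fin n)) :
    rep k n (RingQuot.mkAlgHom k _ x) = pre k n x := by
  simp [rep]

/-- the submodule spanned by the basis elements without sign decoration -/
noncomputable def V : Submodule k (T →₀ k) := Finsupp.supported k k {t : T | t.2 = none}

lemma mem_V_single {t : T} (h : t.2 = none) : Finsupp.single t (1 : k) ∈ V k :=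
  Finsupp.single_mem_supported k _ h

lemma op_mem_V {W : Submodule k (T →₀ k)} {g : T → Option T}
    (hg : ∀ t, t.2 = none → (g t).elim 0 (fun t' => Finsupp.single t' (1 : k)) ∈ W)
    {v : T →₀ k} (hv : v ∈ V k) : op k g v ∈ W := by
  have : V k ≤ W.comap (op k g) := by
    rw [V, Finsupp.supported_eq_span_single, Submodule.span_le]
    rintro _ ⟨t, ht, rfl⟩
    simp only [Submodule.comap_coe, Set.mem_preimage, op_single]
    exact hg t ht
  exact this hv

lemma gen_mem_V (n : ℕ) (x : Fin n ⊕ Fin n) {v : T →₀ k} (hv : v ∈ V k) :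
    op k (genf n x) v ∈ V k := by
  refine op_mem_V k ?_ hv
  rintro ⟨S, u⟩ hu
  simp only at hu
  subst hu
  rcases x with i | i
  · exact mem_V_single k rfl
  · simp only [genf, Ef]
    split_ifs
    · exact mem_V_single k rfl
    · exact mem_V_single k rfl
    · exact zero_mem _

lemma pre_mem_V (n : ℕ) (x : FreeAlgebra k (Fin n ⊕ Fin n)) :
    ∀ v ∈ V k, pre k n x v ∈ V k := by
  induction x using FreeAlgebra.induction with
  | grade0 r => intro v hv; simpa using (V k).smul_mem r hv
  | grade1 x => intro v hv; rw [pre_ι]; exact gen_mem_V k n x hv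
  | mul a b ha hb => intro v hv; rw [map_mul]; exact ha _ (hb _ hv)
  | add a b ha hb => intro v hv; rw [map_add]; exact add_mem (ha _ hv) (hb _ hv)

lemma rep_mem_V (n : ℕ) (x : BrauerAlgebra n (typeD n) k 0) (v : T →₀ k) (hv : v ∈ V k) :
    rep k n x v ∈ V k := by
  obtain ⟨y, rfl⟩ := RingQuot.mkAlgHom_surjective k (BrauerRel n (typeD n) k 0) x
  rw [rep_mk]; exact pre_mem_V k n y v hv

noncomputable def ff (t : T) : Option T := (Ef 0 1 true t).bind (Ef 0 1 false)

lemma ff_none (t : T) (h : t.2 = none) : ff t = none := by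
  obtain ⟨S, u⟩ := t
  simp only at h
  subst h
  unfold ff
  by_cases h : S 0 = S 1
  · rw [Ef_no h (by simp)]; rfl
  · rw [Ef_ne h]; exact Ef_no (by simp [chi]) (by simp)

lemma ff_some (t t' : T) (h : ff t = some t') : t'.2 = none := by
  obtain ⟨S, u⟩ := t
  unfold ff at h
  by_cases h1 : S 0 = S 1
  · by_cases h2 : S = chi 0 1 ∧ u = some (!true)
    · rw [Ef_sp h2.1 h2.2, Option.bind_some, Ef_no (by simp [chi]) (by simp)] at h
      cases h
    · rw [Ef_no h1 h2] at h; cases h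
  · rw [Ef_ne h1, Option.bind_some] at h
    rcases u with _ | u
    · rw [Ef_no (by simp [chi]) (by simp)] at h; cases h
    · rw [Ef_sp rfl (by simp)] at h; cases h; rfl

lemma ff_ne : ff (chi 1 2, some false) = some (chi 0 1, none) := by
  unfold ff
  rw [Ef_ne (by simp [chi]), Option.bind_some, Ef_sp rfl (by simp)]

lemma op_ff_mem (v : T →₀ k) : op k ff v ∈ V k := by
  induction v using Finsupp.induction_linear with
  | zero => simp
  | add a b ha hb => rw [map_add]; exact add_mem ha hb
  | single t c =>
    have : Finsupp.single t c = c • Finsupp.single t (1 : k) := by simp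
    rw [this, map_smul, op_single]
    apply Submodule.smul_mem
    cases h : ff t with
    | none => exact zero_mem _
    | some t' => exact mem_V_single k (ff_some t t' h)

lemma op_ff_V (v : T →₀ k) (hv : v ∈ V k) : op k ff v = 0 := by
  have : op k ff v ∈ (⊥ : Submodule k (T →₀ k)) := op_mem_V k (fun t ht => by
    rw [ff_none t ht]; simp) hv
  simpa using this

lemma regular {A : Type*} [Ring A] [IsSemisimpleRing A] (f : A) : ∃ x, f = f * x * f := by
  obtain ⟨e, he, hs⟩ := IsSemisimpleRing.ideal_eq_span_idempotent (Ideal.span {f})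
  have h1 : e ∈ Ideal.span {f} := hs ▸ Ideal.mem_span_singleton_self e
  have h2 : f ∈ Ideal.span {e} := hs ▸ Ideal.mem_span_singleton_self f
  obtain ⟨x, hx⟩ := Ideal.mem_span_singleton'.1 h1
  obtain ⟨y, hy⟩ := Ideal.mem_span_singleton'.1 h2
  refine ⟨x, ?_⟩
  rw [mul_assoc, hx, ← hy, mul_assoc, he.eq]

theorem not_semisimple_aux (n : ℕ) (hn : 4 ≤ n) : ¬ IsSemisimpleRing (BrauerAlgebra n (typeD n) k 0) := by
  intro hss
  let i0 : Fin n := ⟨0, by omega⟩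
  let i1 : Fin n := ⟨1, by omega⟩
  let f : BrauerAlgebra n (typeD n) k 0 :=
    RingQuot.mkAlgHom k _ (ι k (.inr i0) * ι k (.inr i1))
  have hf : rep k n f = op k ff := by
    simp only [f, rep_mk, map_mul, pre_ι, op_mul]
    rfl
  obtain ⟨x, hx⟩ := regular f
  have h := congrArg (fun a => rep k n a (Finsupp.single (chi 1 2, some false) 1)) hx
  simp only [map_mul, hf, Module.End.mul_apply] at h
  rw [op_ff_V k _ (rep_mem_V k n x _ (op_ff_mem k _)), op_single, ff_ne] at h
  simp at h
end rep

end BrD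

/-- Let `n ≥ 4` with `n ∉ {1,3,5}` and let `k` be a field of
characteristic `e > 0` with `e ∤ n!`. Then the Brauer algebra `Br(D_n, k, 0)`
with parameter `δ = 0` is not a semisimple ring. -/
theorem brauerAlgebra_typeD_posChar_deltaZero_not_isSemisimpleRing
    (n : ℕ) (hn : 4 ≤ n) (hn' : n ∉ ({1, 3, 5} : Set ℕ))
    (k : Type) [Field k] (e : ℕ)
    (he : ringChar k = e) (hepos : 0 < e) (hediv : ¬ e ∣ Nat.factorial n) :
    ¬ IsSemisimpleRing (BrauerAlgebra n (typeD n) k 0) := by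
  exact BrD.not_semisimple_aux k n hn
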